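/- Let (V, turn, T, E, v₀) be a concrete turn-based safety game and (S, turnA, TA, EA, s₀) an abstract turn-based safety game, both with total transition relations, and let R : V → S → Prop satisfy: (h0) R v₀ s₀; (h1) if R v s then turn v = turnA s; (h2) if R v s, turnA s = true and TA s s', then there exists v' with T v v' and R v' s'; (h3) if R v s, turn v = false and T v v', then there exists s' with TA s s' and R v' s'; (h4) if R v s and v ∈ E then s ∈ EA. If player 1 has a winning strategy in the abstract game from s₀ (every consistent play avoids EA), then player 1 has a winning strategy in the concrete game from v₀ (every consistent play avoids E). -/

import Mathlib

/-!
The abstract game is played alongside the concrete one. Each concrete history determines a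
shadow abstract history (`shadow`): on player-1 turns it follows the abstract strategy `fA`, and
on environment turns it answers the observed concrete move by a choice function `g` coming from
the simulation condition. The concrete strategy realizes the move that `fA` makes on the shadow
history, by a choice function `p`. Along a consistent concrete play the shadow is an abstract
play consistent with `fA` whose states stay `R`-related to the concrete ones, so it avoids `EA`,
and hence the concrete play avoids `E`.

Making the shadow a function of the concrete history, rather than choosing an abstract play once
the concrete one is known, is what allows the concrete strategy to refer to it.
-/

/-- A play of a turn-based game from `v0`: starts at `v0` and follows the transition
relation `T`. -/
def IsPlay {V : Type*} (T : V → V → Prop) (v0 : V) (ρ : ℕ → V) : Prop :=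
  ρ 0 = v0 ∧ ∀ n : ℕ, T (ρ n) (ρ (n + 1))

/-- The finite history `ρ(0) ⋯ ρ(n)` of a play. -/
def histPrefix {V : Type*} (ρ : ℕ → V) (n : ℕ) : List V :=
  List.ofFn (fun i : Fin (n + 1) => ρ i)

/-- A player-1 strategy: to every nonempty finite history ending in a state `v` where
player 1 moves (`turn v = true`) it assigns a `T`-successor of `v`. -/
def IsStrategy1 {V : Type*} (turn : V → Bool) (T : V → V → Prop) (f : List V → V) : Prop :=
  ∀ (h : List V) (v : V), h.getLast? = some v → turn v = true → T v (f h)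

/-- A play is consistent with the player-1 strategy `f`. -/
def Consistent1 {V : Type*} (turn : V → Bool) (f : List V → V) (ρ : ℕ → V) : Prop :=
  ∀ n : ℕ, turn (ρ n) = true → ρ (n + 1) = f (histPrefix ρ n)

theorem histPrefix_succ {V : Type*} (ρ : ℕ → V) (n : ℕ) :
    histPrefix ρ (n + 1) = histPrefix ρ n ++ [ρ (n + 1)] := by
  simp only [histPrefix]
  rw [List.ofFn_succ_last]
  simp

theorem getLast?_histPrefix {V : Type*} (ρ : ℕ → V) (n : ℕ) :
    (histPrefix ρ n).getLast? = some (ρ n) := by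
  cases n with
  | zero => simp [histPrefix]
  | succ n => simp [histPrefix_succ]

/-- Successor of the shadow history `h` once the concrete play has moved to `v'`: the strategy's
choice `fA h` if player 1 moves at the last state of `h`, the response `g` to `v'` otherwise.
The default `s0` of `getLastD` matters only for the empty history, which never arises. -/
def shadowNext {V S : Type*} (turnA : S → Bool) (fA : List S → S) (g : S → V → S) (s0 : S)
    (h : List S) (v' : V) : S :=
  if turnA (h.getLastD s0) = true then fA h else g (h.getLastD s0) v'

/-- The abstract history accompanying a concrete history. It starts at `s0`, so the first concrete
state is discarded and each later one extends the shadow by one state. -/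
def shadow {V S : Type*} (turnA : S → Bool) (fA : List S → S) (g : S → V → S) (s0 : S)
    (h : List V) : List S :=
  h.tail.foldl (fun a v' => a ++ [shadowNext turnA fA g s0 a v']) [s0]

theorem shadow_histPrefix_succ {V S : Type*} (turnA : S → Bool) (fA : List S → S) (g : S → V → S)
    (s0 : S) (ρ : ℕ → V) (n : ℕ) :
    shadow turnA fA g s0 (histPrefix ρ (n + 1)) =
      shadow turnA fA g s0 (histPrefix ρ n) ++
        [shadowNext turnA fA g s0 (shadow turnA fA g s0 (histPrefix ρ n)) (ρ (n + 1))] := by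
  have hne : histPrefix ρ n ≠ [] := by simp [histPrefix]
  simp only [shadow, histPrefix_succ, List.tail_append_of_ne_nil hne, List.foldl_append,
    List.foldl_cons, List.foldl_nil]

/-- Winning-strategy transfer (soundness core of Theorem 1): if player 1 wins the abstract
safety game from `s0`, then player 1 wins the concrete safety game from `v0`. -/
theorem abstract_winning_implies_concrete_winning
    {V S : Type*}
    (turn : V → Bool) (T : V → V → Prop) (hT : ∀ v : V, ∃ v', T v v')
    (E : Set V) (v0 : V)
    (turnA : S → Bool) (TA : S → S → Prop) (hTA : ∀ s : S, ∃ s', TA s s')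
    (EA : Set S) (s0 : S)
    (R : V → S → Prop)
    (h0 : R v0 s0)
    (h1 : ∀ v s, R v s → turn v = turnA s)
    (h2 : ∀ v s s', R v s → turnA s = true → TA s s' → ∃ v', T v v' ∧ R v' s')
    (h3 : ∀ v s v', R v s → turn v = false → T v v' → ∃ s', TA s s' ∧ R v' s')
    (h4 : ∀ v s, R v s → v ∈ E → s ∈ EA)
    (hwin : ∃ fA : List S → S, IsStrategy1 turnA TA fA ∧
      ∀ ρA : ℕ → S, IsPlay TA s0 ρA → Consistent1 turnA fA ρA → ∀ n : ℕ, ρA n ∉ EA) :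
    ∃ f : List V → V, IsStrategy1 turn T f ∧
      ∀ ρ : ℕ → V, IsPlay T v0 ρ → Consistent1 turn f ρ → ∀ n : ℕ, ρ n ∉ E := by
  classical
  obtain ⟨fA, hfA, hsafe⟩ := hwin
  have hg : ∀ (s : S) (v' : V), ∃ s', (∃ t, TA s t ∧ R v' t) → TA s s' ∧ R v' s' := by
    intro s v'
    by_cases h : ∃ t, TA s t ∧ R v' t
    · exact h.imp fun t ht _ => ht
    · exact ⟨s0, fun h' => absurd h' h⟩
  choose g hg using hg
  -- Totality of `T` makes `p v s'` a legal move even when no successor of `v` is related to `s'`.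
  have hp : ∀ (v : V) (s' : S), ∃ v', T v v' ∧ ((∃ w, T v w ∧ R w s') → R v' s') := by
    intro v s'
    by_cases h : ∃ w, T v w ∧ R w s'
    · exact h.imp fun w hw => ⟨hw.1, fun _ => hw.2⟩
    · exact (hT v).imp fun w hw => ⟨hw, fun h' => absurd h' h⟩
  choose p hpT hpR using hp
  refine ⟨fun h => p (h.getLastD v0) (fA (shadow turnA fA g s0 h)), ?_, ?_⟩
  · intro h v hv _
    have : h.getLastD v0 = v := by rw [List.getLastD_eq_getLast?, hv]; rfl
    simpa only [this] using hpT v _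
  · intro ρ hρ hcons
    let ρA : ℕ → S := fun n => (shadow turnA fA g s0 (histPrefix ρ n)).getLastD s0
    have hρA0 : ρA 0 = s0 := by simp [ρA, shadow, histPrefix]
    have hρAs : ∀ n, ρA (n + 1) =
        shadowNext turnA fA g s0 (shadow turnA fA g s0 (histPrefix ρ n)) (ρ (n + 1)) := by
      intro n
      simp [ρA, shadow_histPrefix_succ, List.getLastD_eq_getLast?]
    have hsh : ∀ n, shadow turnA fA g s0 (histPrefix ρ n) = histPrefix ρA n := by
      intro n
      induction n with
      | zero => simp [shadow, histPrefix, ρA]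
      | succ n ih => rw [shadow_histPrefix_succ, histPrefix_succ ρA, hρAs, ih]
    have hlast : ∀ n, (histPrefix ρA n).getLastD s0 = ρA n := by
      intro n
      rw [List.getLastD_eq_getLast?, getLast?_histPrefix]; rfl
    have hsys : ∀ n, turnA (ρA n) = true → ρA (n + 1) = fA (histPrefix ρA n) := by
      intro n ht
      rw [hρAs, hsh, shadowNext, hlast, if_pos ht]
    have henv : ∀ n, ¬ turnA (ρA n) = true → ρA (n + 1) = g (ρA n) (ρ (n + 1)) := by
      intro n ht
      rw [hρAs, hsh, shadowNext, hlast, if_neg ht]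
    have hstep : ∀ n, R (ρ n) (ρA n) →
        TA (ρA n) (ρA (n + 1)) ∧ R (ρ (n + 1)) (ρA (n + 1)) := by
      intro n hR
      by_cases ht : turnA (ρA n) = true
      · have hTA' : TA (ρA n) (fA (histPrefix ρA n)) :=
          hfA _ _ (getLast?_histPrefix ρA n) ht
        have hmove : ρ (n + 1) = p (ρ n) (fA (histPrefix ρA n)) := by
          rw [hcons n ((h1 _ _ hR).trans ht)]
          simp only [hsh, List.getLastD_eq_getLast?, getLast?_histPrefix, Option.getD_some]
        rw [hsys n ht, hmove]
        exact ⟨hTA', hpR _ _ (h2 _ _ _ hR ht hTA')⟩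
      · have htv : turn (ρ n) = false := by
          rw [h1 _ _ hR]; simpa using ht
        rw [henv n ht]
        exact hg _ _ (h3 _ _ _ hR htv (hρ.2 n))
    have hR : ∀ n, R (ρ n) (ρA n) := by
      intro n
      induction n with
      | zero => rw [hρ.1, hρA0]; exact h0
      | succ n ih => exact (hstep n ih).2
    intro n hn
    exact hsafe ρA ⟨hρA0, fun n => (hstep n (hR n)).1⟩ hsys n (h4 _ _ (hR n) hn)
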